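/- Let p and q be primes with p ≡ 1 (mod 4), q ≡ 3 (mod 4), such that −p is a quadratic residue modulo q, and let c be an integer with c² ≡ −p (mod q). Work in ℍ[ℚ, −q, −p]. Then the subring of ℍ[ℚ, −q, −p] generated by (1+i)/2, j and (ci+k)/q is a maximal order; it contains the subring ℤ·1 + ℤ·(1+i)/2 + ℤ·j + ℤ·(j+k)/2, and its quotient by that subring, as an additive group, has exactly q elements. The same holds for the subring generated by (1+i)/2, j and (ci−k)/q. -/

import Mathlib

open Quaternion

/-- The reduced norm on the quaternion algebra `ℍ[ℚ, a, b]`. -/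
noncomputable def Nrd {a b : ℚ} (α : ℍ[ℚ, a, b]) : ℚ := (α * star α).re

/-- The reduced trace on the quaternion algebra `ℍ[ℚ, a, b]`. -/
noncomputable def Trd {a b : ℚ} (α : ℍ[ℚ, a, b]) : ℚ := (α + star α).re

/-- An order in `ℍ[ℚ, a, b]`: a subring containing 1 that spans the algebra over `ℚ` and all of
whose elements have reduced trace and reduced norm in `ℤ`. -/
def IsOrder {a b : ℚ} (O : Set ℍ[ℚ, a, b]) : Prop :=
  (∃ S : Subring ℍ[ℚ, a, b], (S : Set ℍ[ℚ, a, b]) = O) ∧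
  Submodule.span ℚ O = ⊤ ∧
  ∀ x ∈ O, (∃ t : ℤ, Trd x = (t : ℚ)) ∧ (∃ n : ℤ, Nrd x = (n : ℚ))

/-- A maximal order: an order not properly contained in any other order. -/
def IsMaximalOrder {a b : ℚ} (O : Set ℍ[ℚ, a, b]) : Prop :=
  IsOrder O ∧ ∀ O' : Set ℍ[ℚ, a, b], IsOrder O' → O ⊆ O' → O' = O

/-- The suborder `ℤ·1 + ℤ·(1+i)/2 + ℤ·j + ℤ·(j+k)/2` of `ℍ[ℚ, −q, −p]` (that is, `R + Rj` for
`R = ℤ[(1+i)/2]`), as a `ℤ`-submodule. -/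
def baseLattice (q p : ℚ) : Submodule ℤ ℍ[ℚ, -q, -p] :=
  Submodule.span ℤ ({1,
    ((2:ℚ)⁻¹) • ((1 : ℍ[ℚ, -q, -p]) + ⟨0,1,0,0⟩),
    ⟨0,0,1,0⟩,
    ((2:ℚ)⁻¹) • ((⟨0,0,1,0⟩ : ℍ[ℚ, -q, -p]) + ⟨0,0,0,1⟩)} : Set ℍ[ℚ, -q, -p])

namespace QOrd

def OMem (q p : ℕ) (c : ℤ) (x : ℍ[ℚ, -(q:ℚ), -(p:ℚ)]) : Prop :=
  ∃ r t s e : ℤ, x.re = r + (c * e + q * t) / 2 ∧ x.imI = (c * e + q * t) / (2 * q) ∧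
    x.imJ = s + e / 2 ∧ x.imK = e / (2 * q)

lemma omem_mul {q p : ℕ} {c m n : ℤ} (hq0 : (q:ℚ) ≠ 0) (hm : (q:ℤ) = 4 * m - 1)
    (hn : c ^ 2 + (p:ℤ) = q * n) {x y : ℍ[ℚ, -(q:ℚ), -(p:ℚ)]}
    (hx : OMem q p c x) (hy : OMem q p c y) : OMem q p c (x * y) := by
  obtain ⟨r, t, s, e, h1, h2, h3, h4⟩ := hx
  obtain ⟨R, T, S, E, g1, g2, g3, g4⟩ := hy
  have hm' : (m:ℚ) = (q + 1) / 4 := by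
    have : (q:ℚ) = 4 * m - 1 := by exact_mod_cast hm
    linarith
  have hn' : (n:ℚ) = (c ^ 2 + p) / q := by
    rw [eq_div_iff hq0]
    have : (c:ℚ) ^ 2 + p = q * n := by exact_mod_cast hn
    linarith
  refine ⟨r*R - q*m*t*T - p*s*S - m*n*e*E - m*c*(t*E + e*T) - p*s*E,
    r*T+t*R + q*t*T + c*(s*T - t*S) + c*e*T + n*(s*E - e*S),
    r*S+s*R + q*s*T - m*t*E + m*e*T + c*s*E,
    r*E+e*R + q*t*S - q*s*T + q*t*E - c*s*E + c*e*S + c*e*E, ?_, ?_, ?_, ?_⟩ <;>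
  · simp only [QuaternionAlgebra.re_mul, QuaternionAlgebra.imI_mul, QuaternionAlgebra.imJ_mul,
      QuaternionAlgebra.imK_mul, h1, h2, h3, h4, g1, g2, g3, g4]
    push_cast
    try rw [hm']
    try rw [hn']
    field_simp
    ring

lemma omem_one (q p : ℕ) (c : ℤ) : OMem q p c 1 :=
  ⟨1, 0, 0, 0, by simp, by simp, by simp, by simp⟩

lemma omem_zero (q p : ℕ) (c : ℤ) : OMem q p c 0 :=
  ⟨0, 0, 0, 0, by simp, by simp, by simp, by simp⟩

lemma omem_add {q p : ℕ} {c : ℤ} {x y : ℍ[ℚ, -(q:ℚ), -(p:ℚ)]}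
    (hx : OMem q p c x) (hy : OMem q p c y) : OMem q p c (x + y) := by
  obtain ⟨r, t, s, e, h1, h2, h3, h4⟩ := hx
  obtain ⟨R, T, S, E, g1, g2, g3, g4⟩ := hy
  refine ⟨r + R, t + T, s + S, e + E, ?_, ?_, ?_, ?_⟩ <;>
  · simp only [QuaternionAlgebra.re_add, QuaternionAlgebra.imI_add, QuaternionAlgebra.imJ_add,
      QuaternionAlgebra.imK_add, h1, h2, h3, h4, g1, g2, g3, g4]
    push_cast
    ring

lemma omem_neg {q p : ℕ} {c : ℤ} {x : ℍ[ℚ, -(q:ℚ), -(p:ℚ)]}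
    (hx : OMem q p c x) : OMem q p c (-x) := by
  obtain ⟨r, t, s, e, h1, h2, h3, h4⟩ := hx
  refine ⟨-r, -t, -s, -e, ?_, ?_, ?_, ?_⟩ <;>
  · simp only [QuaternionAlgebra.re_neg, QuaternionAlgebra.imI_neg, QuaternionAlgebra.imJ_neg,
      QuaternionAlgebra.imK_neg, h1, h2, h3, h4]
    push_cast
    ring

def ORing (q p : ℕ) (c m n : ℤ) (hq0 : (q:ℚ) ≠ 0) (hm : (q:ℤ) = 4 * m - 1)
    (hn : c ^ 2 + (p:ℤ) = q * n) : Subring ℍ[ℚ, -(q:ℚ), -(p:ℚ)] where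
  carrier := {x | OMem q p c x}
  mul_mem' := omem_mul hq0 hm hn
  one_mem' := omem_one q p c
  add_mem' := omem_add
  zero_mem' := omem_zero q p c
  neg_mem' := omem_neg

lemma omem_w {q p : ℕ} {c m : ℤ} (hq0 : (q:ℚ) ≠ 0) (hm : (q:ℤ) = 4 * m - 1) :
    OMem q p c (((2:ℚ)⁻¹) • ((1 : ℍ[ℚ, -(q:ℚ), -(p:ℚ)]) + ⟨0,1,0,0⟩)) := by
  have hm' : (q:ℚ) = 4 * m - 1 := by exact_mod_cast hm
  refine ⟨1 - 2 * m, 1, 0, 0, ?_, ?_, ?_, ?_⟩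
  · simp; rw [hm']; ring
  · simp; field_simp
  · simp
  · simp

lemma omem_j (q p : ℕ) (c : ℤ) : OMem q p c ⟨0,0,1,0⟩ :=
  ⟨0, 0, 1, 0, by simp, by simp, by simp, by simp⟩

lemma omem_g {q p : ℕ} {c : ℤ} (hq0 : (q:ℚ) ≠ 0) :
    OMem q p c (((q:ℚ)⁻¹) • ((c:ℚ) • (⟨0,1,0,0⟩ : ℍ[ℚ, -(q:ℚ), -(p:ℚ)]) + ⟨0,0,0,1⟩)) := by
  refine ⟨-c, 0, -1, 2, ?_, ?_, ?_, ?_⟩ <;> simp <;> field_simp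

lemma closure_eq {q p : ℕ} {c m n : ℤ} (hq0 : (q:ℚ) ≠ 0) (hm : (q:ℤ) = 4 * m - 1)
    (hn : c ^ 2 + (p:ℤ) = q * n) :
    Subring.closure
        ({((2:ℚ)⁻¹) • ((1 : ℍ[ℚ, -(q:ℚ), -(p:ℚ)]) + ⟨0,1,0,0⟩),
          ⟨0,0,1,0⟩,
          ((q:ℚ)⁻¹) • ((c:ℚ) • (⟨0,1,0,0⟩ : ℍ[ℚ, -(q:ℚ), -(p:ℚ)]) + ⟨0,0,0,1⟩)}
          : Set ℍ[ℚ, -(q:ℚ), -(p:ℚ)]) = ORing q p c m n hq0 hm hn := by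
  have hm' : (q:ℚ) = 4 * m - 1 := by exact_mod_cast hm
  apply le_antisymm
  · rw [Subring.closure_le]
    rintro x (rfl | rfl | rfl)
    · exact omem_w hq0 hm
    · exact omem_j q p c
    · exact omem_g hq0
  · rintro x ⟨r, t, s, e, h1, h2, h3, h4⟩
    set C := Subring.closure
        ({((2:ℚ)⁻¹) • ((1 : ℍ[ℚ, -(q:ℚ), -(p:ℚ)]) + ⟨0,1,0,0⟩),
          ⟨0,0,1,0⟩,
          ((q:ℚ)⁻¹) • ((c:ℚ) • (⟨0,1,0,0⟩ : ℍ[ℚ, -(q:ℚ), -(p:ℚ)]) + ⟨0,0,0,1⟩)}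
          : Set ℍ[ℚ, -(q:ℚ), -(p:ℚ)]) with hC
    have a1 : ((2:ℚ)⁻¹) • ((1 : ℍ[ℚ, -(q:ℚ), -(p:ℚ)]) + ⟨0,1,0,0⟩) ∈ C :=
      Subring.subset_closure (by simp)
    have a2 : (⟨0,0,1,0⟩ : ℍ[ℚ, -(q:ℚ), -(p:ℚ)]) ∈ C :=
      Subring.subset_closure (by simp)
    have a3 : ((q:ℚ)⁻¹) • ((c:ℚ) • (⟨0,1,0,0⟩ : ℍ[ℚ, -(q:ℚ), -(p:ℚ)]) + ⟨0,0,0,1⟩) ∈ C :=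
      Subring.subset_closure (by simp)
    obtain ⟨L, hL⟩ : ∃ L : ℤ, L = r + t * (2 * m - 1) + e * c := ⟨_, rfl⟩
    have hL' : (L:ℚ) = r + t * (2 * m - 1) + e * c := by rw [hL]; push_cast; ring
    have hx : x = L • (1 : ℍ[ℚ, -(q:ℚ), -(p:ℚ)])
        + t • (((2:ℚ)⁻¹) • ((1 : ℍ[ℚ, -(q:ℚ), -(p:ℚ)]) + ⟨0,1,0,0⟩))
        + (s + e) • (⟨0,0,1,0⟩ : ℍ[ℚ, -(q:ℚ), -(p:ℚ)])
        + e • ((((2:ℚ)⁻¹) • ((1 : ℍ[ℚ, -(q:ℚ), -(p:ℚ)]) + ⟨0,1,0,0⟩)) *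
          (((q:ℚ)⁻¹) • ((c:ℚ) • (⟨0,1,0,0⟩ : ℍ[ℚ, -(q:ℚ), -(p:ℚ)]) + ⟨0,0,0,1⟩))) := by
      have hmm : (m:ℚ) = (q + 1) / 4 := by linarith
      ext
      · simp [h1]; rw [hL', hmm]; field_simp; ring
      · simp [h2]; field_simp; ring
      · simp [h3]; field_simp; ring
      · simp [h4]; field_simp
    rw [hx]
    exact add_mem (add_mem (add_mem (zsmul_mem (one_mem _) _) (zsmul_mem a1 _))
      (zsmul_mem a2 _)) (zsmul_mem (mul_mem a1 a3) _)

lemma omem_int {q p : ℕ} {c m n : ℤ} (hq0 : (q:ℚ) ≠ 0) (hm : (q:ℤ) = 4 * m - 1)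
    (hn : c ^ 2 + (p:ℤ) = q * n) {x : ℍ[ℚ, -(q:ℚ), -(p:ℚ)]} (hx : OMem q p c x) :
    (∃ t : ℤ, Trd x = (t : ℚ)) ∧ (∃ n : ℤ, Nrd x = (n : ℚ)) := by
  obtain ⟨r, t, s, e, h1, h2, h3, h4⟩ := hx
  have hm' : (m:ℚ) = (q + 1) / 4 := by
    have : (q:ℚ) = 4 * m - 1 := by exact_mod_cast hm
    linarith
  have hn' : (n:ℚ) = (c ^ 2 + p) / q := by
    rw [eq_div_iff hq0]
    have : (c:ℚ) ^ 2 + p = q * n := by exact_mod_cast hn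
    linarith
  constructor
  · refine ⟨2 * r + (c * e + q * t), ?_⟩
    simp [Trd, h1]; ring
  · refine ⟨r^2 + r*(c*e+q*t) + q*m*t^2 + 2*m*c*t*e + m*n*e^2 + p*s^2 + p*s*e, ?_⟩
    simp [Nrd, h1, h2, h3, h4]
    rw [hm', hn']
    field_simp
    ring

lemma dvd_both {p q : ℕ} (hp : p.Prime) (hq : q.Prime)
    (hp1 : p % 4 = 1) (hq3 : q % 4 = 3)
    (c : ℤ) (hc : (q : ℤ) ∣ c ^ 2 + (p : ℤ)) (D E : ℤ) (h : (p:ℤ) ∣ q * D ^ 2 + E ^ 2) :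
    (p:ℤ) ∣ D ∧ (p:ℤ) ∣ E := by
  have := Fact.mk hp
  have := Fact.mk hq
  have hD : (p:ℤ) ∣ D := by
    by_contra hD
    have hD' : (D : ZMod p) ≠ 0 := by
      rwa [Ne, ZMod.intCast_zmod_eq_zero_iff_dvd]
    have h' : (q:ZMod p) * D ^ 2 + E ^ 2 = 0 := by
      have := (ZMod.intCast_zmod_eq_zero_iff_dvd _ p).2 h
      push_cast at this; exact this
    obtain ⟨u, hu⟩ := (ZMod.exists_sq_eq_neg_one_iff (p := p)).2 (by omega)
    have hsq : IsSquare (q : ZMod p) := by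
      refine ⟨u * E / D, ?_⟩
      field_simp
      linear_combination h' + E ^ 2 * hu
    rw [ZMod.exists_sq_eq_prime_iff_of_mod_four_eq_one hp1 (by rintro rfl; omega)] at hsq
    obtain ⟨v, hv⟩ := hsq
    have hc' : (c:ZMod q) ^ 2 + p = 0 := by
      have := (ZMod.intCast_zmod_eq_zero_iff_dvd _ q).2 hc
      push_cast at this; exact this
    have hp0 : (p : ZMod q) ≠ 0 := by
      rw [Ne, ZMod.natCast_eq_zero_iff, Nat.prime_dvd_prime_iff_eq hq hp]
      rintro rfl; omega
    have hv0 : v ≠ 0 := by rintro rfl; exact hp0 (by simpa using hv)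
    refine (ZMod.exists_sq_eq_neg_one_iff (p := q)).1 ⟨c / v, ?_⟩ hq3
    field_simp
    linear_combination hv - hc'
  refine ⟨hD, ?_⟩
  have hpp : Prime (p:ℤ) := Nat.prime_iff_prime_int.1 hp
  refine hpp.dvd_of_dvd_pow (n := 2) ?_
  have h2 : (p:ℤ) ∣ q * D ^ 2 := Dvd.dvd.mul_left (Dvd.dvd.pow hD (by norm_num)) _
  exact (dvd_add_right h2).1 h

lemma omem_of_int {p q : ℕ} (hp : p.Prime) (hq : q.Prime)
    (hp1 : p % 4 = 1) (hq3 : q % 4 = 3)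
    (c : ℤ) (hc : (q : ℤ) ∣ c ^ 2 + (p : ℤ)) (x : ℍ[ℚ, -(q:ℚ), -(p:ℚ)])
    (S : Subring ℍ[ℚ, -(q:ℚ), -(p:ℚ)])
    (hS : ∀ x ∈ S, (∃ t : ℤ, Trd x = (t : ℚ)) ∧ (∃ n : ℤ, Nrd x = (n : ℚ)))
    (hO : ∀ y, OMem q p c y → y ∈ S) (hx : x ∈ S) : OMem q p c x := by
  have hq0 : (q:ℚ) ≠ 0 := by exact_mod_cast hq.ne_zero
  have hp0 : (p:ℚ) ≠ 0 := by exact_mod_cast hp.ne_zero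
  obtain ⟨m, hm⟩ : ∃ m : ℤ, (q:ℤ) = 4 * m - 1 := ⟨((q:ℤ) + 1) / 4, by omega⟩
  obtain ⟨l, hl⟩ : ∃ l : ℤ, (p:ℤ) = 2 * l + 1 := ⟨(p:ℤ) / 2, by omega⟩
  obtain ⟨n, hn⟩ := hc
  have a1 := hO _ (omem_w (p := p) (c := c) hq0 hm)
  have a2 := hO _ (omem_j q p c)
  have a3 := hO _ (omem_g (p := p) (c := c) hq0)
  obtain ⟨⟨a, ha⟩, ⟨N, hN⟩⟩ := hS _ hx
  obtain ⟨t1, ht1⟩ := (hS _ (mul_mem hx a1)).1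
  obtain ⟨t2, ht2⟩ := (hS _ (mul_mem hx a2)).1
  obtain ⟨t3, ht3⟩ := (hS _ (mul_mem hx a3)).1
  obtain ⟨t4, ht4⟩ := (hS _ (mul_mem hx (mul_mem a1 a2))).1
  simp [Trd] at ha ht1 ht2 ht3 ht4
  simp [Nrd] at hN
  obtain ⟨x0, x1, x2, x3⟩ := x
  simp only at ha ht1 ht2 ht3 ht4 hN
  -- integer coordinates
  have e1 : (2 * q * x1 : ℚ) = ((a - 2 * t1 : ℤ) : ℚ) := by
    push_cast; linarith
  have e2 : (2 * p * x2 : ℚ) = ((-t2 : ℤ) : ℚ) := by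
    push_cast; linarith
  have e3 : (2 * p * q * x3 : ℚ) = ((t2 - 2 * t4 : ℤ) : ℚ) := by
    push_cast; linarith
  have e4 : (2 * (c * x1 + p * x3) : ℚ) = ((-t3 : ℤ) : ℚ) := by
    field_simp at ht3
    push_cast; linarith
  have e0 : (2 * x0 : ℚ) = a := by linarith
  have f4 : c * (a - 2 * t1) + (t2 - 2 * t4) = - q * t3 := by
    have : (c:ℚ) * ((a - 2 * t1 : ℤ) : ℚ) + ((t2 - 2 * t4 : ℤ) : ℚ) = - q * (t3:ℚ) := by
      rw [← e1, ← e3]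
      push_cast at e4
      linear_combination (q:ℚ) * e4
    exact_mod_cast this
  have f5 : p * q * a ^ 2 + p * (a - 2 * t1) ^ 2 + q * (-t2) ^ 2 + (t2 - 2 * t4) ^ 2
      = 4 * p * q * N := by
    have : (p:ℚ) * q * (a:ℚ) ^ 2 + p * ((a - 2 * t1 : ℤ) : ℚ) ^ 2 + q * ((-t2 : ℤ) : ℚ) ^ 2
        + ((t2 - 2 * t4 : ℤ) : ℚ) ^ 2 = 4 * p * q * N := by
      rw [← e1, ← e3, ← e2, ← e0, ← hN]
      ring
    exact_mod_cast this
  obtain ⟨⟨d, hd⟩, ⟨e, he⟩⟩ := dvd_both hp hq hp1 hq3 c ⟨n, hn⟩ (-t2) (t2 - 2 * t4)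
    ⟨4 * q * N - q * a ^ 2 - (a - 2 * t1) ^ 2, by linear_combination f5⟩
  have hqp : Prime (q:ℤ) := Nat.prime_iff_prime_int.1 hq
  have hqc : ¬ (q:ℤ) ∣ c := by
    intro h
    have h1 : (q:ℤ) ∣ c ^ 2 := Dvd.dvd.pow h (by norm_num)
    have h2 : (q:ℤ) ∣ p := (dvd_add_right h1).1 ⟨n, hn⟩
    have h3 : q ∣ p := by exact_mod_cast h2
    rw [Nat.prime_dvd_prime_iff_eq hq hp] at h3
    omega
  have h6 : (q:ℤ) ∣ c * ((a - 2 * t1) - c * e) :=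
    ⟨-t3 - n * e, by linear_combination f4 - he - e * hn⟩
  obtain ⟨t, ht⟩ := (hqp.dvd_or_dvd h6).resolve_left hqc
  have ht' : (a - 2 * t1 : ℤ) = c * e + q * t := by linarith
  have hs : d = 2 * (-t4 - l * (d + e) - e) + e := by
    have : (2 * l + 1) * (d + e) = - 2 * t4 := by rw [← hl]; linarith
    linarith
  have hs' : (d:ℚ) = 2 * (-t4 - l * (d + e) - e : ℤ) + e := by exact_mod_cast hs
  rw [hd] at e2
  rw [he] at e3
  rw [ht'] at e1
  have ht'' : (a:ℚ) - 2 * t1 = c * e + q * t := by exact_mod_cast ht'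
  push_cast at e1 e2 e3
  refine ⟨t1, t, -t4 - l * (d + e) - e, e, ?_, ?_, ?_, ?_⟩
  · simp only; linarith
  · simp only; rw [eq_div_iff (by positivity)]; linarith
  · simp only
    have : 2 * x2 = d := mul_left_cancel₀ hp0 (by linarith)
    linarith
  · simp only; rw [eq_div_iff (by positivity)]
    exact mul_left_cancel₀ hp0 (by linarith)

lemma base_iff {q p : ℕ} {c m : ℤ} (hq0 : (q:ℚ) ≠ 0) (hm : (q:ℤ) = 4 * m - 1)
    (x : ℍ[ℚ, -(q:ℚ), -(p:ℚ)]) :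
    x ∈ baseLattice (q:ℚ) (p:ℚ) ↔
      ∃ r t s f : ℤ, x.re = r + (c * (q * f) + q * t) / 2 ∧
        x.imI = (c * (q * f) + q * t) / (2 * q) ∧
        x.imJ = s + (q * f) / 2 ∧ x.imK = (q * f) / (2 * q) := by
  have hm' : (q:ℚ) = 4 * m - 1 := by exact_mod_cast hm
  have hmm : (m:ℚ) = (q + 1) / 4 := by linarith
  constructor
  · intro hx
    unfold baseLattice at hx
    induction hx using Submodule.span_induction with
    | mem x hx =>
      rcases hx with rfl | rfl | rfl | rfl
      · exact ⟨1, 0, 0, 0, by simp, by simp, by simp, by simp⟩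
      · refine ⟨1 - 2 * m, 1, 0, 0, ?_, ?_, ?_, ?_⟩
        · simp; rw [hm']; ring
        · simp; field_simp
        · simp
        · simp
      · exact ⟨0, 0, 1, 0, by simp, by simp, by simp, by simp⟩
      · refine ⟨0, -c, 1 - 2 * m, 1, ?_, ?_, ?_, ?_⟩
        · simp; ring
        · simp; ring
        · simp; rw [hm']; ring
        · simp; field_simp
    | zero => exact ⟨0, 0, 0, 0, by simp, by simp, by simp, by simp⟩
    | add x y _ _ hx hy =>
      obtain ⟨r, t, s, e, h1, h2, h3, h4⟩ := hx
      obtain ⟨R, T, S, E, g1, g2, g3, g4⟩ := hy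
      refine ⟨r + R, t + T, s + S, e + E, ?_, ?_, ?_, ?_⟩ <;>
      · simp only [QuaternionAlgebra.re_add, QuaternionAlgebra.imI_add,
          QuaternionAlgebra.imJ_add,
          QuaternionAlgebra.imK_add, h1, h2, h3, h4, g1, g2, g3, g4]
        push_cast
        ring
    | smul a x _ hx =>
      obtain ⟨r, t, s, e, h1, h2, h3, h4⟩ := hx
      refine ⟨a * r, a * t, a * s, a * e, ?_, ?_, ?_, ?_⟩ <;>
      · simp only [QuaternionAlgebra.re_smul, QuaternionAlgebra.imI_smul,
          QuaternionAlgebra.imJ_smul,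
          QuaternionAlgebra.imK_smul, h1, h2, h3, h4]
        rw [zsmul_eq_mul]
        push_cast
        ring
  · rintro ⟨r, t, s, f, h1, h2, h3, h4⟩
    obtain ⟨A, hA⟩ : ∃ A : ℤ, A = r + (2 * m - 1) * (c * f + t) := ⟨_, rfl⟩
    obtain ⟨B, hB⟩ : ∃ A : ℤ, A = c * f + t := ⟨_, rfl⟩
    obtain ⟨C, hC⟩ : ∃ A : ℤ, A = s + (2 * m - 1) * f := ⟨_, rfl⟩
    have hA' : (A:ℚ) = r + (2 * m - 1) * (c * f + t) := by rw [hA]; push_cast; ring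
    have hB' : (B:ℚ) = c * f + t := by rw [hB]; push_cast; ring
    have hC' : (C:ℚ) = s + (2 * m - 1) * f := by rw [hC]; push_cast; ring
    have hx : x = A • (1 : ℍ[ℚ, -(q:ℚ), -(p:ℚ)])
        + B • (((2:ℚ)⁻¹) • ((1 : ℍ[ℚ, -(q:ℚ), -(p:ℚ)]) + ⟨0,1,0,0⟩))
        + C • (⟨0,0,1,0⟩ : ℍ[ℚ, -(q:ℚ), -(p:ℚ)])
        + f • (((2:ℚ)⁻¹) • ((⟨0,0,1,0⟩ : ℍ[ℚ, -(q:ℚ), -(p:ℚ)]) + ⟨0,0,0,1⟩)) := by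
      ext
      · simp [h1]; rw [hA', hB', hmm]; field_simp; ring
      · simp [h2]; rw [hB']; field_simp
      · simp [h3]; rw [hC', hmm]; field_simp; ring
      · simp [h4]; field_simp
    rw [hx]
    unfold baseLattice
    refine add_mem (add_mem (add_mem ?_ ?_) ?_) ?_ <;>
    · apply Submodule.smul_mem
      apply Submodule.subset_span
      simp

lemma index_eq {q p : ℕ} {c m : ℤ} (hq0 : (q:ℚ) ≠ 0) (hm : (q:ℤ) = 4 * m - 1)
    (K : Subring ℍ[ℚ, -(q:ℚ), -(p:ℚ)]) (hK : ∀ x, x ∈ K ↔ OMem q p c x) :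
    ((baseLattice (q:ℚ) (p:ℚ)).toAddSubgroup.addSubgroupOf K.toAddSubgroup).index = q := by
  have key : ∀ (x : ℍ[ℚ, -(q:ℚ), -(p:ℚ)]) (e : ℤ), x.imK = e / (2 * q) →
      (2 * q * x.imK).num = e := by
    intro x e h
    have : 2 * q * x.imK = (e:ℚ) := by rw [h]; field_simp
    rw [this]; simp
  let f : K.toAddSubgroup →+ ZMod q := AddMonoidHom.mk'
    (fun x => (((2 * q * (x : ℍ[ℚ, -(q:ℚ), -(p:ℚ)]).imK).num : ℤ) : ZMod q)) (by
      rintro ⟨x, hx⟩ ⟨y, hy⟩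
      obtain ⟨r, t, s, e, h1, h2, h3, h4⟩ := (hK x).1 hx
      obtain ⟨R, T, S, E, g1, g2, g3, g4⟩ := (hK y).1 hy
      simp only [AddMemClass.mk_add_mk]
      rw [key x e h4, key y E g4, key (x + y) (e + E)
        (by simp only [QuaternionAlgebra.imK_add, h4, g4]; push_cast; ring)]
      push_cast; rfl)
  have hker : (baseLattice (q:ℚ) (p:ℚ)).toAddSubgroup.addSubgroupOf K.toAddSubgroup = f.ker := by
    ext ⟨x, hx⟩
    rw [AddSubgroup.mem_addSubgroupOf, AddMonoidHom.mem_ker]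
    change x ∈ baseLattice (q:ℚ) (p:ℚ) ↔ (((2 * q * x.imK).num : ℤ) : ZMod q) = 0
    rw [base_iff (c := c) hq0 hm, ZMod.intCast_zmod_eq_zero_iff_dvd]
    constructor
    · rintro ⟨r, t, s, e, h1, h2, h3, h4⟩
      rw [key x (q * e) (by rw [h4]; push_cast; rfl)]
      exact dvd_mul_right _ _
    · obtain ⟨r, t, s, e, h1, h2, h3, h4⟩ := (hK x).1 hx
      rw [key x e h4]
      rintro ⟨g, rfl⟩
      push_cast at h1 h2 h3 h4
      exact ⟨r, t, s, g, h1, h2, h3, h4⟩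
  have hsurj : Function.Surjective f := by
    intro z
    obtain ⟨e, rfl⟩ := ZMod.intCast_surjective z
    refine ⟨⟨⟨c * e / 2, c * e / (2 * q), e / 2, e / (2 * q)⟩,
      (hK _).2 ⟨0, 0, 0, e, by simp, by simp, by simp, by simp⟩⟩, ?_⟩
    change (((2 * q * _ : ℚ).num : ℤ) : ZMod q) = e
    rw [key _ e rfl]
  rw [hker, AddSubgroup.index_ker, AddMonoidHom.range_eq_top.2 hsurj]
  simp

lemma all_of {p q : ℕ} (hp : p.Prime) (hq : q.Prime)
    (hp1 : p % 4 = 1) (hq3 : q % 4 = 3)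
    (c : ℤ) (hc : (q : ℤ) ∣ c ^ 2 + (p : ℤ)) (K : Subring ℍ[ℚ, -(q:ℚ), -(p:ℚ)])
    (hKc : K = Subring.closure
        ({((2:ℚ)⁻¹) • ((1 : ℍ[ℚ, -(q:ℚ), -(p:ℚ)]) + ⟨0,1,0,0⟩),
          ⟨0,0,1,0⟩,
          ((q:ℚ)⁻¹) • ((c:ℚ) • (⟨0,1,0,0⟩ : ℍ[ℚ, -(q:ℚ), -(p:ℚ)]) + ⟨0,0,0,1⟩)}
          : Set ℍ[ℚ, -(q:ℚ), -(p:ℚ)])) :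
    IsMaximalOrder (K : Set ℍ[ℚ, -(q:ℚ), -(p:ℚ)]) ∧
    (baseLattice (q:ℚ) (p:ℚ) : Set ℍ[ℚ, -(q:ℚ), -(p:ℚ)]) ⊆ K ∧
    ((baseLattice (q:ℚ) (p:ℚ)).toAddSubgroup.addSubgroupOf K.toAddSubgroup).index = q := by
  have hq0 : (q:ℚ) ≠ 0 := by exact_mod_cast hq.ne_zero
  obtain ⟨m, hm⟩ : ∃ m : ℤ, (q:ℤ) = 4 * m - 1 := ⟨((q:ℤ) + 1) / 4, by omega⟩
  have hc' := hc
  obtain ⟨n, hn⟩ := hc'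
  have hK : ∀ x, x ∈ K ↔ OMem q p c x := by
    intro x
    rw [hKc, closure_eq hq0 hm hn]
    rfl
  refine ⟨⟨⟨⟨K, rfl⟩, ?_, ?_⟩, ?_⟩, ?_, index_eq hq0 hm K hK⟩
  · rw [eq_top_iff]
    rintro x -
    have hx : x = (x.re - (x.imI - c * x.imK)) • (1 : ℍ[ℚ, -(q:ℚ), -(p:ℚ)])
        + (2 * (x.imI - c * x.imK)) •
          (((2:ℚ)⁻¹) • ((1 : ℍ[ℚ, -(q:ℚ), -(p:ℚ)]) + ⟨0,1,0,0⟩))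
        + x.imJ • (⟨0,0,1,0⟩ : ℍ[ℚ, -(q:ℚ), -(p:ℚ)])
        + (q * x.imK) •
          (((q:ℚ)⁻¹) • ((c:ℚ) • (⟨0,1,0,0⟩ : ℍ[ℚ, -(q:ℚ), -(p:ℚ)]) + ⟨0,0,0,1⟩)) := by
      ext <;> simp <;> field_simp <;> ring
    rw [hx]
    refine add_mem (add_mem (add_mem ?_ ?_) ?_) ?_ <;>
      refine Submodule.smul_mem _ _ (Submodule.subset_span ((hK _).2 ?_))
    · exact omem_one q p c
    · exact omem_w hq0 hm
    · exact omem_j q p c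
    · exact omem_g hq0
  · intro x hx
    exact omem_int hq0 hm hn ((hK x).1 hx)
  · rintro O' ⟨⟨S, rfl⟩, -, hS⟩ hsub
    refine Set.Subset.antisymm ?_ hsub
    intro x hx
    exact (hK x).2 (omem_of_int hp hq hp1 hq3 c hc x S hS (fun y hy => hsub ((hK y).2 hy)) hx)
  · intro x hx
    obtain ⟨r, t, s, g, h1, h2, h3, h4⟩ := (base_iff (c := c) hq0 hm x).1 hx
    exact (hK x).2 ⟨r, t, s, q * g, by push_cast; exact h1, by push_cast; exact h2,
      by push_cast; exact h3, by push_cast; exact h4⟩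

end QOrd

/-- For primes `p ≡ 1 (mod 4)` and `q ≡ 3 (mod 4)` with `c² ≡ −p (mod q)`, in `ℍ[ℚ, −q, −p]`
the subring generated by `(1+i)/2`, `j` and `(ci+k)/q` is a maximal order containing
`ℤ·1 + ℤ·(1+i)/2 + ℤ·j + ℤ·(j+k)/2` with additive index `q`; the same holds for the subring
generated by `(1+i)/2`, `j` and `(ci−k)/q`. -/
theorem maximal_orders_disc_q (p q : ℕ) (hp : p.Prime) (hq : q.Prime)
    (hp1 : p % 4 = 1) (hq3 : q % 4 = 3)
    (c : ℤ) (hc : (q : ℤ) ∣ c ^ 2 + (p : ℤ)) :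
    (IsMaximalOrder ((Subring.closure
        ({((2:ℚ)⁻¹) • ((1 : ℍ[ℚ, -(q:ℚ), -(p:ℚ)]) + ⟨0,1,0,0⟩),
          ⟨0,0,1,0⟩,
          ((q:ℚ)⁻¹) • ((c:ℚ) • (⟨0,1,0,0⟩ : ℍ[ℚ, -(q:ℚ), -(p:ℚ)]) + ⟨0,0,0,1⟩)}
          : Set ℍ[ℚ, -(q:ℚ), -(p:ℚ)]) : Subring ℍ[ℚ, -(q:ℚ), -(p:ℚ)])
          : Set ℍ[ℚ, -(q:ℚ), -(p:ℚ)])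
      ∧ (baseLattice (q:ℚ) (p:ℚ) : Set ℍ[ℚ, -(q:ℚ), -(p:ℚ)]) ⊆
          (Subring.closure
            ({((2:ℚ)⁻¹) • ((1 : ℍ[ℚ, -(q:ℚ), -(p:ℚ)]) + ⟨0,1,0,0⟩),
              ⟨0,0,1,0⟩,
              ((q:ℚ)⁻¹) • ((c:ℚ) • (⟨0,1,0,0⟩ : ℍ[ℚ, -(q:ℚ), -(p:ℚ)]) + ⟨0,0,0,1⟩)}
              : Set ℍ[ℚ, -(q:ℚ), -(p:ℚ)]) : Set ℍ[ℚ, -(q:ℚ), -(p:ℚ)])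
      ∧ ((baseLattice (q:ℚ) (p:ℚ)).toAddSubgroup.addSubgroupOf
          (Subring.closure
            ({((2:ℚ)⁻¹) • ((1 : ℍ[ℚ, -(q:ℚ), -(p:ℚ)]) + ⟨0,1,0,0⟩),
              ⟨0,0,1,0⟩,
              ((q:ℚ)⁻¹) • ((c:ℚ) • (⟨0,1,0,0⟩ : ℍ[ℚ, -(q:ℚ), -(p:ℚ)]) + ⟨0,0,0,1⟩)}
              : Set ℍ[ℚ, -(q:ℚ), -(p:ℚ)])).toAddSubgroup).index = q)
    ∧ (IsMaximalOrder ((Subring.closure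
        ({((2:ℚ)⁻¹) • ((1 : ℍ[ℚ, -(q:ℚ), -(p:ℚ)]) + ⟨0,1,0,0⟩),
          ⟨0,0,1,0⟩,
          ((q:ℚ)⁻¹) • ((c:ℚ) • (⟨0,1,0,0⟩ : ℍ[ℚ, -(q:ℚ), -(p:ℚ)]) - ⟨0,0,0,1⟩)}
          : Set ℍ[ℚ, -(q:ℚ), -(p:ℚ)]) : Subring ℍ[ℚ, -(q:ℚ), -(p:ℚ)])
          : Set ℍ[ℚ, -(q:ℚ), -(p:ℚ)])
      ∧ (baseLattice (q:ℚ) (p:ℚ) : Set ℍ[ℚ, -(q:ℚ), -(p:ℚ)]) ⊆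
          (Subring.closure
            ({((2:ℚ)⁻¹) • ((1 : ℍ[ℚ, -(q:ℚ), -(p:ℚ)]) + ⟨0,1,0,0⟩),
              ⟨0,0,1,0⟩,
              ((q:ℚ)⁻¹) • ((c:ℚ) • (⟨0,1,0,0⟩ : ℍ[ℚ, -(q:ℚ), -(p:ℚ)]) - ⟨0,0,0,1⟩)}
              : Set ℍ[ℚ, -(q:ℚ), -(p:ℚ)]) : Set ℍ[ℚ, -(q:ℚ), -(p:ℚ)])
      ∧ ((baseLattice (q:ℚ) (p:ℚ)).toAddSubgroup.addSubgroupOf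
          (Subring.closure
            ({((2:ℚ)⁻¹) • ((1 : ℍ[ℚ, -(q:ℚ), -(p:ℚ)]) + ⟨0,1,0,0⟩),
              ⟨0,0,1,0⟩,
              ((q:ℚ)⁻¹) • ((c:ℚ) • (⟨0,1,0,0⟩ : ℍ[ℚ, -(q:ℚ), -(p:ℚ)]) - ⟨0,0,0,1⟩)}
              : Set ℍ[ℚ, -(q:ℚ), -(p:ℚ)])).toAddSubgroup).index = q) := by
  refine ⟨QOrd.all_of hp hq hp1 hq3 c hc _ rfl,
    QOrd.all_of hp hq hp1 hq3 (-c) (by simpa using hc) _ ?_⟩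
  have hg : ((q:ℚ)⁻¹) • (((-c : ℤ):ℚ) • (⟨0,1,0,0⟩ : ℍ[ℚ, -(q:ℚ), -(p:ℚ)]) + ⟨0,0,0,1⟩)
      = -(((q:ℚ)⁻¹) • ((c:ℚ) • (⟨0,1,0,0⟩ : ℍ[ℚ, -(q:ℚ), -(p:ℚ)]) - ⟨0,0,0,1⟩)) := by
    ext <;> simp
  rw [hg]
  apply le_antisymm <;> rw [Subring.closure_le]
  · rintro x (rfl | rfl | rfl)
    · exact Subring.subset_closure (by simp)
    · exact Subring.subset_closure (by simp)
    · rw [SetLike.mem_coe, ← neg_mem_iff]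
      exact Subring.subset_closure (by simp)
  · rintro x (rfl | rfl | rfl)
    · exact Subring.subset_closure (by simp)
    · exact Subring.subset_closure (by simp)
    · rw [SetLike.mem_coe, neg_mem_iff]
      exact Subring.subset_closure (by simp)
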